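/- Let T: Lip(X,E) → Lip(Y,F) be a linear biseparating map. Then there exist a bi-Lipschitz homeomorphism h: Y → X and, for each y ∈ Y, a linear bijection Jy: E → F such that (Tf)(y) = Jy(f(h(y))) for every f ∈ Lip(X,E) and every y ∈ Y. -/

import Mathlib

/-!
A biseparating map is local, although nothing is assumed about its continuity: if `f₁ = f₂` on an
open set `A`, then `T f₁` and `T f₂` agree wherever a function `T p` with `coz p ⊆ A` is nonzero.
For `y : Y` and `r > 0` let `preBall T y r` be the union of the cozero sets of those `g` for which
`coz (T g) ⊆ B(y, r)`. If `A` meets every `preBall T y r` and `f₁ = f₂` on `A`, then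
`T f₁ y = T f₂ y` by continuity of the images (`exists_agree`, `eq_of_forall_exists`). Three
consequences give the theorem.

* Two sets `A`, `B` at positive distance cannot both meet all the `preBall T y r`: multiply the
  preimage of a nonzero constant by a Lipschitz cutoff which is `1` on `A` and `0` on `B`
  (`not_far_apart`). A combinatorial argument on sequences then shows that the diameters of
  `preBall T y r` tend to zero (`preBall_small`), so by completeness of `X` these sets shrink to one
  point `h y`. The resulting relation `Supp` between `X` and `Y` is symmetric under exchanging `T`
  with its inverse, hence `h` is bijective.

* If `f (h y) = 0` then `T f y = 0` (`Supp.map_eq_zero`). When `h y` is isolated this is locality.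
  Otherwise a cutoff of slope `O(1 / dist(·, h y))` multiplies `f` into a Lipschitz function `g`
  that equals `f` near some points accumulating at `h y` and `0` near others, so that `T g y` is
  both `T f y` and `0`. Consequently `T f y = J y (f (h y))` with `J y e` the value at `y` of the
  image of the constant `e`; the same fact for the inverse of `T` makes `J y` injective.

* Let `k` be the preimage of a nonzero constant `v`. For real Lipschitz `s` the formula gives
  `T (s • k) = (s ∘ h) • v`, so `s ∘ h` is Lipschitz. By Baire's theorem the Lipschitz constants are
  uniform over the `1`-Lipschitz functions with values bounded by a bound on the diameter of `X`, and testing on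
  distance functions shows that `h` is Lipschitz (`lipschitz_of_comp`, `lipschitz_supp`). The same
  holds for its inverse.
-/

open Metric Set Function Bornology
open scoped NNReal

/-- `f` is a bounded Lipschitz function. -/
def IsLip {X E : Type*} [PseudoMetricSpace X] [NormedAddCommGroup E] (f : X → E) : Prop :=
  (∃ K : ℝ≥0, LipschitzWith K f) ∧ ∃ C : ℝ, ∀ x, ‖f x‖ ≤ C

/-- The cozero set of `f`. -/
def coz {X E : Type*} [Zero E] (f : X → E) : Set X := {x | f x ≠ 0}

/-- The norm `‖f‖_L = max {‖f‖_∞, L(f)}` on bounded Lipschitz functions. -/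
noncomputable def lipNorm {X E : Type*} [PseudoMetricSpace X] [NormedAddCommGroup E]
    (f : X → E) : ℝ :=
  max (⨆ x, ‖f x‖) (⨆ p : X × X, ‖f p.1 - f p.2‖ / dist p.1 p.2)

/-- `T` is a linear biseparating map from `Lip(X,E)` onto `Lip(Y,F)`:
it maps bounded Lipschitz functions to bounded Lipschitz functions, is linear,
restricts to a bijection between the spaces of bounded Lipschitz functions, and
both `T` and its inverse are separating (disjointness preserving). -/
structure IsBisep (𝕂 : Type*) {X Y E F : Type*} [RCLike 𝕂]
    [PseudoMetricSpace X] [PseudoMetricSpace Y]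
    [NormedAddCommGroup E] [NormedSpace 𝕂 E] [NormedAddCommGroup F] [NormedSpace 𝕂 F]
    (T : (X → E) → (Y → F)) : Prop where
  maps_lip : ∀ f, IsLip f → IsLip (T f)
  map_add : ∀ f g, IsLip f → IsLip g → T (f + g) = T f + T g
  map_smul : ∀ (c : 𝕂) (f : X → E), IsLip f → T (c • f) = c • T f
  inj : ∀ f g, IsLip f → IsLip g → T f = T g → f = g
  surj : ∀ g, IsLip g → ∃ f, IsLip f ∧ T f = g
  sep : ∀ f g, IsLip f → IsLip g → coz f ∩ coz g = ∅ → coz (T f) ∩ coz (T g) = ∅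
  sep_inv : ∀ f g, IsLip f → IsLip g → coz (T f) ∩ coz (T g) = ∅ → coz f ∩ coz g = ∅


/-! ### Bounded Lipschitz functions and scalar cutoffs -/

section Cutoff

variable {X E : Type*} [MetricSpace X] [NormedAddCommGroup E]

theorem isLip_of_le {f : X → E} (C M : ℝ) (h : ∀ x y, ‖f x - f y‖ ≤ C * dist x y)
    (hM : ∀ x, ‖f x‖ ≤ M) : IsLip f :=
  ⟨⟨_, LipschitzWith.of_dist_le' (K := C) fun x y => by rw [dist_eq_norm]; exact h x y⟩, M, hM⟩

theorem IsLip.bounds {f : X → E} (hf : IsLip f) :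
    ∃ C M : ℝ, 0 ≤ C ∧ 0 ≤ M ∧ (∀ x y, ‖f x - f y‖ ≤ C * dist x y) ∧ ∀ x, ‖f x‖ ≤ M := by
  obtain ⟨⟨K, hK⟩, M, hM⟩ := hf
  refine ⟨K, |M|, K.2, abs_nonneg _, fun x y => ?_, fun x => (hM x).trans (le_abs_self M)⟩
  rw [← dist_eq_norm]
  exact hK.dist_le_mul x y

theorem IsLip.cont {f : X → E} (hf : IsLip f) : Continuous f :=
  hf.1.choose_spec.continuous

theorem isLip_const (e : E) : IsLip (fun _ : X => e) :=
  isLip_of_le 0 ‖e‖ (by simp) (by simp)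

theorem IsLip.sub {f g : X → E} (hf : IsLip f) (hg : IsLip g) : IsLip (f - g) := by
  obtain ⟨C, M, -, -, h1, h2⟩ := hf.bounds
  obtain ⟨C', M', -, -, h1', h2'⟩ := hg.bounds
  refine isLip_of_le (C + C') (M + M') (fun x y => ?_) fun x => ?_
  · calc ‖(f - g) x - (f - g) y‖ = ‖(f x - f y) - (g x - g y)‖ := by
          congr 1; simp only [Pi.sub_apply]; abel
      _ ≤ ‖f x - f y‖ + ‖g x - g y‖ := norm_sub_le _ _
      _ ≤ _ := by linarith [h1 x y, h1' x y]
  · exact (norm_sub_le _ _).trans (add_le_add (h2 x) (h2' x))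

/-- Product of a vector-valued function with a scalar cutoff `u`. The cutoff need not be Lipschitz:
it may oscillate quickly where `f` is small. -/
theorem IsLip.cutoff (𝕂 : Type*) [RCLike 𝕂] [NormedSpace 𝕂 E] {f : X → E} (hf : IsLip f)
    {u : X → ℝ} (B C : ℝ) (hu : ∀ x, |u x| ≤ B)
    (hC : ∀ x y, ‖f x‖ * |u x - u y| ≤ C * dist x y) :
    IsLip (fun x => (u x : 𝕂) • f x) := by
  obtain ⟨L, M, hL, hM, h1, h2⟩ := hf.bounds
  refine isLip_of_le (C + B * L) (B * M) (fun x y => ?_) fun x => ?_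
  · have key : (u x : 𝕂) • f x - (u y : 𝕂) • f y
        = ((u x - u y : ℝ) : 𝕂) • f x + (u y : 𝕂) • (f x - f y) := by
      push_cast
      module
    rw [key]
    refine (norm_add_le _ _).trans ?_
    rw [norm_smul, norm_smul, RCLike.norm_ofReal, RCLike.norm_ofReal]
    have := mul_le_mul (hu y) (h1 x y) (norm_nonneg _) ((abs_nonneg _).trans (hu y))
    have := hC x y
    nlinarith
  · rw [norm_smul, RCLike.norm_ofReal]
    exact mul_le_mul (hu x) (h2 x) (norm_nonneg _) ((abs_nonneg _).trans (hu x))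

/-- The retraction of `ℝ` onto `[0, 1]`. -/
noncomputable def clamp (t : ℝ) : ℝ := max 0 (min 1 t)

theorem abs_clamp_le (t : ℝ) : |clamp t| ≤ 1 := by
  unfold clamp
  rw [abs_of_nonneg (le_max_left _ _)]
  exact max_le zero_le_one (min_le_left _ _)

theorem abs_clamp_sub_le (a b : ℝ) : |clamp a - clamp b| ≤ |a - b| := by
  unfold clamp
  refine (abs_max_sub_max_le_max _ _ _ _).trans ?_
  refine max_le (by simp) ((abs_min_sub_min_le_max _ _ _ _).trans ?_)
  simp

theorem clamp_eq_one {t : ℝ} (h : 1 ≤ t) : clamp t = 1 := by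
  simp [clamp, h]

theorem clamp_eq_zero {t : ℝ} (h : t ≤ 0) : clamp t = 0 := by
  unfold clamp
  exact max_eq_left ((min_le_right _ _).trans h)

theorem IsLip.smul_clamp (𝕂 : Type*) [RCLike 𝕂] [NormedSpace 𝕂 E] {f : X → E} (hf : IsLip f)
    {u : X → ℝ} (C : ℝ) (hC : ∀ x y, |u x - u y| ≤ C * dist x y) :
    IsLip (fun x => (clamp (u x) : 𝕂) • f x) := by
  obtain ⟨L, M, hL, hM, h1, h2⟩ := hf.bounds
  refine hf.cutoff 𝕂 1 (M * C) (fun x => abs_clamp_le _) fun x y => ?_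
  rw [mul_assoc]
  exact mul_le_mul (h2 x) ((abs_clamp_sub_le _ _).trans (hC x y)) (abs_nonneg _) hM

theorem exists_bump (𝕂 : Type*) [RCLike 𝕂] [NormedSpace 𝕂 E] [Nontrivial E] {A : Set X}
    (hA : IsOpen A) {x : X} (hx : x ∈ A) :
    ∃ p : X → E, IsLip p ∧ coz p ⊆ A ∧ p x ≠ 0 := by
  obtain ⟨e, he⟩ := exists_ne (0 : E)
  obtain ⟨ε, hε, hball⟩ := Metric.isOpen_iff.1 hA x hx
  refine ⟨fun z => (clamp (1 - dist z x / ε) : 𝕂) • e,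
    (isLip_const e).smul_clamp 𝕂 (1 / ε) fun a b => ?_, fun z hz => hball ?_, ?_⟩
  · rw [show 1 - dist a x / ε - (1 - dist b x / ε) = (1 / ε) * -(dist a x - dist b x) by ring,
      abs_mul, abs_neg, abs_of_pos (by positivity : 0 < 1 / ε)]
    gcongr
    exact abs_dist_sub_le _ _ _
  · by_contra hcon
    apply hz
    have : 1 ≤ dist z x / ε := by
      rw [le_div_iff₀ hε]; simpa using hcon
    simp [clamp_eq_zero (show 1 - dist z x / ε ≤ 0 by linarith)]
  · simp [clamp, he]

/-- A cutoff around `x₀` adapted to a function vanishing at `x₀`: away from `x₀` it is `1` where the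
distance to `S` is at most `ρ / 8` and `0` where it is at least `ρ / 4`, with `ρ` the distance to `x₀`.
Its slope is of order `1 / ρ`, which the bound `‖f‖ ≤ L ρ` absorbs. -/
theorem IsLip.smul_conical (𝕂 : Type*) [RCLike 𝕂] [NormedSpace 𝕂 E] {f : X → E} (hf : IsLip f)
    {x₀ : X} (h0 : f x₀ = 0) {S : Set X} (hS : x₀ ∈ closure S) :
    IsLip (fun x => (clamp (2 - 8 * (infDist x S / dist x x₀)) : 𝕂) • f x) := by
  obtain ⟨L, M, hL, hM, h1, h2⟩ := hf.bounds
  have hD : ∀ x, infDist x S ≤ dist x x₀ := fun x => by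
    rw [← infDist_closure]
    exact infDist_le_dist_of_mem hS
  have hlip : ∀ x y, |infDist x S - infDist y S| ≤ dist x y := fun x y => by
    have := (lipschitz_infDist_pt S).dist_le_mul x y
    simpa [Real.dist_eq] using this
  refine hf.cutoff 𝕂 1 (16 * L) (fun x => abs_clamp_le _) fun x y => ?_
  have hfx : ‖f x‖ ≤ L * dist x x₀ := by simpa [h0] using h1 x x₀
  refine (mul_le_mul hfx (abs_clamp_sub_le _ _) (abs_nonneg _) (by positivity)).trans ?_
  rcases (dist_nonneg (x := x) (y := x₀)).eq_or_lt with hx | hx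
  · rw [← hx]; simp; positivity
  have hq : dist x x₀ * |infDist x S / dist x x₀ - infDist y S / dist y x₀| ≤ 2 * dist x y := by
    have hy' : dist y x₀ * (infDist y S / dist y x₀) = infDist y S := by
      rcases (dist_nonneg (x := y) (y := x₀)).eq_or_lt with hy | hy
      · have := hD y
        have h3 := infDist_nonneg (x := y) (s := S)
        rw [← hy] at this ⊢
        simp [le_antisymm this h3]
      · field_simp
    have hq1 : |infDist y S / dist y x₀| ≤ 1 := by
      rw [abs_of_nonneg (div_nonneg infDist_nonneg dist_nonneg)]
      exact div_le_one_of_le₀ (hD y) dist_nonneg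
    rw [← abs_of_pos hx, ← abs_mul, abs_of_pos hx]
    have e : dist x x₀ * (infDist x S / dist x x₀ - infDist y S / dist y x₀)
        = (infDist x S - infDist y S)
          - (dist x x₀ - dist y x₀) * (infDist y S / dist y x₀) := by
      have : dist x x₀ * (infDist x S / dist x x₀) = infDist x S := by field_simp
      linear_combination this - hy'
    rw [e]
    refine (abs_sub _ _).trans ?_
    rw [abs_mul]
    have := mul_le_mul (abs_dist_sub_le x y x₀) hq1 (abs_nonneg _) dist_nonneg
    linarith [hlip x y]
  rw [show 2 - 8 * (infDist x S / dist x x₀) - (2 - 8 * (infDist y S / dist y x₀))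
    = -(8 * (infDist x S / dist x x₀ - infDist y S / dist y x₀)) by ring, abs_neg, abs_mul]
  have := mul_le_mul_of_nonneg_left hq hL
  rw [abs_of_pos (by norm_num : (0:ℝ) < 8)]
  nlinarith

end Cutoff

/-! ### Composition operators on real Lipschitz functions -/

/-- Automatic continuity: if composing with `h` preserves the Lipschitz property of real functions,
then by Baire's theorem it does so uniformly over the complete convex set of `1`-Lipschitz functions
with values bounded by a bound `|D|` of the distances in `X`. This set contains the distance
functions, so `h` is Lipschitz. -/
theorem lipschitz_of_comp {X Y : Type*} [MetricSpace X] [MetricSpace Y]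
    (hXb : IsBounded (univ : Set X)) (h : Y → X)
    (hs : ∀ s : X → ℝ, IsLip s → ∃ C : ℝ, ∀ y y', |s (h y) - s (h y')| ≤ C * dist y y') :
    ∃ K : ℝ≥0, LipschitzWith K h := by
  obtain ⟨D, hD⟩ := Metric.isBounded_iff.1 hXb
  replace hD : ∀ x x' : X, dist x x' ≤ |D| := fun x x' =>
    (hD (mem_univ x) (mem_univ x')).trans (le_abs_self D)
  let B : Set (BoundedContinuousFunction X ℝ) :=
    {s | (∀ x x', |s x - s x'| ≤ dist x x') ∧ ∀ x, |s x| ≤ |D|}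
  have hcont : ∀ x : X, Continuous fun s : BoundedContinuousFunction X ℝ => s x := fun x =>
    (BoundedContinuousFunction.lipschitz_eval_const x).continuous
  have hB : IsClosed B := by
    refine IsClosed.inter
      (s₁ := {s : BoundedContinuousFunction X ℝ | ∀ x x', |s x - s x'| ≤ dist x x'})
      (s₂ := {s : BoundedContinuousFunction X ℝ | ∀ x, |s x| ≤ |D|}) ?_ ?_
    · simp only [Set.ofPred_forall]
      exact isClosed_iInter fun x => isClosed_iInter fun x' =>
        isClosed_le ((hcont x).sub (hcont x')).abs continuous_const
    · simp only [Set.ofPred_forall]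
      exact isClosed_iInter fun x => isClosed_le (hcont x).abs continuous_const
  have : CompleteSpace B := hB.completeSpace_coe
  have : Nonempty B := ⟨⟨0, by simp [B]⟩⟩
  let G : ℕ → Set B := fun N => {s | ∀ y y', |s.1 (h y) - s.1 (h y')| ≤ N * dist y y'}
  have hG : ∀ N, IsClosed (G N) := fun N => by
    simp only [G, Set.ofPred_forall]
    exact isClosed_iInter fun y => isClosed_iInter fun y' =>
      isClosed_le (((hcont _).comp continuous_subtype_val).sub
        ((hcont _).comp continuous_subtype_val)).abs continuous_const
  have hU : ⋃ N, G N = univ := by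
    refine eq_univ_of_forall fun s => mem_iUnion.2 ?_
    obtain ⟨C, hC⟩ := hs s.1 (isLip_of_le 1 |D| (by simpa using s.2.1) (by simpa using s.2.2))
    obtain ⟨N, hN⟩ := exists_nat_ge C
    exact ⟨N, fun y y' => (hC y y').trans (mul_le_mul_of_nonneg_right hN dist_nonneg)⟩
  obtain ⟨N, s₀, hs₀⟩ := nonempty_interior_of_iUnion_of_closed hG hU
  obtain ⟨ε, hε, hball⟩ := Metric.isOpen_iff.1 isOpen_interior s₀ hs₀
  -- A convex combination `(1 - t) s₀ + t s` with `t` this small stays in the ball around `s₀`.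
  obtain ⟨t, ht0, ht1, htε⟩ : ∃ t : ℝ, 0 < t ∧ t ≤ 1 ∧ t * (2 * |D|) < ε := by
    refine ⟨min 1 (ε / (2 * (2 * |D| + 1))), by positivity, min_le_left _ _, ?_⟩
    calc min 1 (ε / (2 * (2 * |D| + 1))) * (2 * |D|)
        ≤ ε / (2 * (2 * |D| + 1)) * (2 * |D| + 1) := by
          apply mul_le_mul (min_le_right _ _) (by linarith) (by positivity) (by positivity)
      _ = ε / 2 := by field_simp
      _ < ε := by linarith
  have hmem : ∀ s : B, (1 - t) • s₀.1 + t • s.1 ∈ B := fun s => by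
    constructor
    · intro x x'
      have h1 := abs_le.1 (s₀.2.1 x x')
      have h2 := abs_le.1 (s.2.1 x x')
      rw [abs_le]
      simp only [BoundedContinuousFunction.coe_add, BoundedContinuousFunction.coe_smul,
        Pi.add_apply, smul_eq_mul]
      constructor <;> nlinarith
    · intro x
      have h1 := abs_le.1 (s₀.2.2 x)
      have h2 := abs_le.1 (s.2.2 x)
      rw [abs_le]
      simp only [BoundedContinuousFunction.coe_add, BoundedContinuousFunction.coe_smul,
        Pi.add_apply, smul_eq_mul]
      constructor <;> nlinarith
  have hunif : ∀ s : B, ∀ y y', |s.1 (h y) - s.1 (h y')| ≤ (2 * N / t) * dist y y' := by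
    intro s y y'
    have hin : (⟨_, hmem s⟩ : B) ∈ G N := by
      refine interior_subset (hball ?_)
      rw [Metric.mem_ball, Subtype.dist_eq]
      refine lt_of_le_of_lt ((BoundedContinuousFunction.dist_le (by positivity)).2 fun x => ?_) htε
      have h1 := abs_le.1 (s₀.2.2 x)
      have h2 := abs_le.1 (s.2.2 x)
      rw [Real.dist_eq]
      simp only [BoundedContinuousFunction.coe_add, BoundedContinuousFunction.coe_smul,
        Pi.add_apply, smul_eq_mul]
      rw [show (1 - t) * s₀.1 x + t * s.1 x - s₀.1 x = t * (s.1 x - s₀.1 x) by ring, abs_mul,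
        abs_of_pos ht0]
      refine mul_le_mul_of_nonneg_left ?_ ht0.le
      rw [abs_le]
      constructor <;> linarith
    have h1 := abs_le.1 (hin y y')
    have h2 := abs_le.1 (interior_subset hs₀ y y')
    simp only [BoundedContinuousFunction.coe_add, BoundedContinuousFunction.coe_smul,
        Pi.add_apply, smul_eq_mul] at h1
    have hd : 0 ≤ (N : ℝ) * dist y y' := by positivity
    rw [div_mul_eq_mul_div, le_div_iff₀ ht0]
    have hmul : |s.1 (h y) - s.1 (h y')| * t = |(s.1 (h y) - s.1 (h y')) * t| := by
      rw [abs_mul, abs_of_pos ht0]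
    rw [hmul, abs_le]
    constructor <;> nlinarith
  refine ⟨_, LipschitzWith.of_dist_le' (K := 2 * N / t) fun y y' => ?_⟩
  -- Test on the distance function to `h y'`.
  let s : BoundedContinuousFunction X ℝ :=
    BoundedContinuousFunction.ofNormedAddCommGroup (fun x => dist x (h y'))
      (continuous_id.dist continuous_const) |D|
      (fun x => by rw [Real.norm_eq_abs, abs_of_nonneg dist_nonneg]; exact hD _ _)
  have hsB : s ∈ B := ⟨fun x x' => abs_dist_sub_le _ _ _, fun x => by
    change |dist x (h y')| ≤ |D|
    rw [abs_of_nonneg dist_nonneg]; exact hD _ _⟩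
  have := hunif ⟨s, hsB⟩ y y'
  change |dist (h y) (h y') - dist (h y') (h y')| ≤ _ at this
  rwa [dist_self, sub_zero, abs_of_nonneg dist_nonneg] at this

/-! ### Locality of separating bijections -/

section Local

variable {𝕂 X Y E F : Type*} [RCLike 𝕂] [MetricSpace X] [MetricSpace Y]
  [NormedAddCommGroup E] [NormedSpace 𝕂 E] [NormedAddCommGroup F] [NormedSpace 𝕂 F]
  {T : (X → E) → (Y → F)}

theorem IsBisep.map_sub (hT : IsBisep 𝕂 T) {f g : X → E} (hf : IsLip f) (hg : IsLip g) :
    T (f - g) = T f - T g := by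
  have h := hT.map_add (f - g) g (hf.sub hg) hg
  rw [sub_add_cancel] at h
  rw [h, add_sub_cancel_right]

/-- The inverse of a biseparating map, with arbitrary values at non-Lipschitz functions, is
biseparating. -/
theorem IsBisep.exists_inverse (hT : IsBisep 𝕂 T) :
    ∃ S : (Y → F) → (X → E), IsBisep 𝕂 S ∧ (∀ f, IsLip f → S (T f) = f) ∧
      ∀ g, IsLip g → T (S g) = g := by
  classical
  choose! S hS hTS using hT.surj
  have hST : ∀ f, IsLip f → S (T f) = f := fun f hf =>
    hT.inj _ _ (hS _ (hT.maps_lip f hf)) hf (hTS _ (hT.maps_lip f hf))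
  refine ⟨S, ⟨hS, fun f g hf hg => ?_, fun c f hf => ?_, fun f g hf hg h => ?_,
    fun f hf => ⟨T f, hT.maps_lip f hf, hST f hf⟩, fun f g hf hg h => ?_,
    fun f g hf hg h => ?_⟩, hST, hTS⟩
  · have h := hT.map_add _ _ (hS f hf) (hS g hg)
    rw [hTS f hf, hTS g hg] at h
    rw [← h, hST]
    obtain ⟨C, M, -, -, h1, h2⟩ := (hS f hf).bounds
    obtain ⟨C', M', -, -, h1', h2'⟩ := (hS g hg).bounds
    refine isLip_of_le (C + C') (M + M') (fun x y => ?_) fun x =>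
      (norm_add_le _ _).trans (add_le_add (h2 x) (h2' x))
    simp only [Pi.add_apply, add_sub_add_comm]
    refine (norm_add_le _ _).trans ?_
    linarith [h1 x y, h1' x y]
  · have h := hT.map_smul c _ (hS f hf)
    rw [hTS f hf] at h
    rw [← h, hST]
    obtain ⟨C, M, -, -, h1, h2⟩ := (hS f hf).bounds
    refine isLip_of_le (‖c‖ * C) (‖c‖ * M) (fun x y => ?_) fun x => ?_
    · rw [Pi.smul_apply, Pi.smul_apply, ← smul_sub, norm_smul, mul_assoc]
      gcongr
      exact h1 x y
    · rw [Pi.smul_apply, norm_smul]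
      gcongr
      exact h2 x
  · rw [← hTS f hf, ← hTS g hg, h]
  · refine hT.sep_inv _ _ (hS f hf) (hS g hg) ?_
    rwa [hTS f hf, hTS g hg]
  · have := hT.sep _ _ (hS f hf) (hS g hg) h
    rwa [hTS f hf, hTS g hg] at this

/-- The open subset of `X` which `T` matches with the ball `B(y, r)` of `Y`: the union of the
cozero sets of the functions `g` such that `T g` lives on that ball. -/
def preBall (T : (X → E) → (Y → F)) (y : Y) (r : ℝ) : Set X :=
  {x | ∃ g, IsLip g ∧ coz (T g) ⊆ ball y r ∧ g x ≠ 0}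

theorem preBall_mono (y : Y) {r r' : ℝ} (h : r ≤ r') : preBall T y r ⊆ preBall T y r' :=
  fun _ ⟨g, hg, hc, hx⟩ => ⟨g, hg, hc.trans (ball_subset_ball h), hx⟩

theorem preBall_nonempty [Nontrivial F] (hT : IsBisep 𝕂 T) (y : Y) {r : ℝ} (hr : 0 < r) :
    (preBall T y r).Nonempty := by
  obtain ⟨p, hp, hpc, hpy⟩ := exists_bump (E := F) 𝕂 isOpen_ball (mem_ball_self (x := y) hr)
  obtain ⟨g, hg, rfl⟩ := hT.surj p hp
  by_contra hne
  have h0 : g = 0 := by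
    ext x
    by_contra hx
    exact hne ⟨x, g, hg, hpc, hx⟩
  have h1 := hT.map_sub hg hg
  rw [sub_self, sub_self, ← h0] at h1
  exact hpy (by rw [h1]; rfl)

theorem exists_mem_coz_inter (hT : IsBisep 𝕂 T) {p g : X → E} (hp : IsLip p) (hg : IsLip g)
    {x : X} (hpx : p x ≠ 0) (hgx : g x ≠ 0) : ∃ y, T p y ≠ 0 ∧ T g y ≠ 0 := by
  by_contra! hcon
  have : coz p ∩ coz g = ∅ := hT.sep_inv p g hp hg
    (eq_empty_iff_forall_notMem.2 fun y hy => hy.2 (hcon y hy.1))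
  exact (this ▸ (show x ∈ coz p ∩ coz g from ⟨hpx, hgx⟩) : x ∈ (∅ : Set X))

/-- Locality: functions agreeing on an open set that meets `preBall T y r` have images agreeing
somewhere in `B(y, r)`. -/
theorem exists_agree [Nontrivial E] (hT : IsBisep 𝕂 T) {A : Set X} (hA : IsOpen A) {y : Y}
    {r : ℝ} (hm : (A ∩ preBall T y r).Nonempty) {f₁ f₂ : X → E} (h₁ : IsLip f₁) (h₂ : IsLip f₂)
    (heq : ∀ x ∈ A, f₁ x = f₂ x) : ∃ y' ∈ ball y r, T f₁ y' = T f₂ y' := by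
  obtain ⟨x, hxA, g, hg, hgc, hgx⟩ := hm
  obtain ⟨p, hp, hpA, hpx⟩ := exists_bump (E := E) 𝕂 hA hxA
  obtain ⟨y', hy1, hy2⟩ := exists_mem_coz_inter hT hp hg hpx hgx
  refine ⟨y', hgc hy2, ?_⟩
  have h := hT.sep (f₁ - f₂) p (h₁.sub h₂) hp
    (eq_empty_iff_forall_notMem.2 fun z hz => hz.1 (sub_eq_zero.2 (heq z (hpA hz.2))))
  rw [hT.map_sub h₁ h₂] at h
  by_contra hne
  exact (h ▸ (show y' ∈ coz (T f₁ - T f₂) ∩ coz (T p) from ⟨sub_ne_zero.2 hne, hy1⟩) :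
    y' ∈ (∅ : Set Y))

/-- Locality in the limit, by continuity of the images. -/
theorem eq_of_forall_exists {φ ψ : Y → F} (hφ : Continuous φ) (hψ : Continuous ψ) {y : Y}
    (h : ∀ r > 0, ∃ y' ∈ ball y r, φ y' = ψ y') : φ y = ψ y := by
  have : y ∈ closure {z | φ z = ψ z} := Metric.mem_closure_iff.2 fun ε hε => by
    obtain ⟨y', h1, h2⟩ := h ε hε
    exact ⟨y', h2, by rwa [dist_comm, ← mem_ball]⟩
  rwa [(isClosed_eq hφ hψ).closure_eq] at this

/-- Two sets at positive distance cannot both meet every `preBall T y r`: a cutoff separating them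
would be sent to a function with two different values at `y`. -/
theorem not_far_apart [Nontrivial E] [Nontrivial F] (hT : IsBisep 𝕂 T) (y : Y) {S : Set X}
    {δ : ℝ} (hδ : 0 < δ)
    (h₁ : ∀ r > 0, ({x | infDist x S < δ} ∩ preBall T y r).Nonempty)
    (h₂ : ∀ r > 0, ({x | 2 * δ < infDist x S} ∩ preBall T y r).Nonempty) : False := by
  obtain ⟨v, hv⟩ := exists_ne (0 : F)
  obtain ⟨k, hk, hTk⟩ := hT.surj _ (isLip_const (X := Y) v)
  have hg := hk.smul_clamp 𝕂 (u := fun x => 2 - 1 / δ * infDist x S) (1 / δ) fun x x' => by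
    have := (lipschitz_infDist_pt S).dist_le_mul x x'
    rw [show 2 - 1 / δ * infDist x S - (2 - 1 / δ * infDist x' S)
      = -(1 / δ * (infDist x S - infDist x' S)) by ring, abs_neg, abs_mul,
      abs_of_pos (by positivity : 0 < 1 / δ)]
    gcongr
    simpa [Real.dist_eq] using this
  set g : X → E := fun x => (clamp (2 - 1 / δ * infDist x S) : 𝕂) • k x with hgdef
  have h0 : IsLip (0 : X → E) := isLip_const 0
  have hT0 : T 0 = 0 := by simpa using hT.map_sub h0 h0
  have e₁ : T g y = T k y := eq_of_forall_exists (hT.maps_lip g hg).cont (hT.maps_lip k hk).cont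
    fun r hr => exists_agree hT (isOpen_lt (continuous_infDist_pt S) continuous_const) (h₁ r hr)
      hg hk fun x hx => by
        have : 1 ≤ 2 - 1 / δ * infDist x S := by
          have : 1 / δ * infDist x S ≤ 1 := by
            rw [one_div_mul_eq_div, div_le_one hδ]; exact (show infDist x S < δ from hx).le
          linarith
        simp only [hgdef, clamp_eq_one this, RCLike.ofReal_one, one_smul]
  have e₂ : T g y = T 0 y := eq_of_forall_exists (hT.maps_lip g hg).cont (hT.maps_lip 0 h0).cont
    fun r hr => exists_agree hT (isOpen_lt continuous_const (continuous_infDist_pt S)) (h₂ r hr)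
      hg h0 fun x hx => by
        have : 2 - 1 / δ * infDist x S ≤ 0 := by
          have : 2 ≤ 1 / δ * infDist x S := by
            rw [one_div_mul_eq_div, le_div_iff₀ hδ]; exact (show 2 * δ < infDist x S from hx).le
          linarith
        simp only [hgdef, clamp_eq_zero this, RCLike.ofReal_zero, zero_smul, Pi.zero_apply]
  rw [e₁, hTk, hT0] at e₂
  exact hv e₂

/-! ### The support relation between points of `X` and `Y` -/

/-- `x` supports `y`: every neighbourhood of `x` meets every `preBall T y r`. -/
def Supp (T : (X → E) → (Y → F)) (x : X) (y : Y) : Prop :=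
  ∀ r > 0, (ball x r ∩ preBall T y r).Nonempty

theorem Supp.inverse [Nontrivial E] (hT : IsBisep 𝕂 T) {S : (Y → F) → (X → E)}
    (hST : ∀ f, IsLip f → S (T f) = f) {x : X} {y : Y} (h : Supp T x y) : Supp S y x := by
  intro r hr
  obtain ⟨x', hx', g, hg, hgc, hgx⟩ := h r hr
  obtain ⟨p, hp, hpA, hpx⟩ := exists_bump (E := E) 𝕂 isOpen_ball hx'
  obtain ⟨y', hy1, hy2⟩ := exists_mem_coz_inter hT hp hg hpx hgx
  exact ⟨y', hgc hy2, T p, hT.maps_lip p hp, by rwa [hST p hp], hy1⟩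

theorem Supp.unique [Nontrivial E] [Nontrivial F] (hT : IsBisep 𝕂 T) {x x' : X} {y : Y}
    (h : Supp T x y) (h' : Supp T x' y) : x = x' := by
  by_contra hne
  have hd : 0 < dist x' x := dist_pos.2 (Ne.symm hne)
  have hδ : 0 < dist x' x / 4 := by linarith
  refine not_far_apart hT y (S := {x}) hδ (fun r hr => ?_) fun r hr => ?_
  · obtain ⟨z, hz, hzp⟩ := h (min r (dist x' x / 4)) (lt_min hr hδ)
    refine ⟨z, ?_, preBall_mono y (min_le_left _ _) hzp⟩
    rw [Set.mem_ofPred_eq, infDist_singleton]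
    exact lt_of_lt_of_le (mem_ball.1 hz) (min_le_right _ _)
  · obtain ⟨z, hz, hzp⟩ := h' (min r (dist x' x / 4)) (lt_min hr hδ)
    refine ⟨z, ?_, preBall_mono y (min_le_left _ _) hzp⟩
    rw [Set.mem_ofPred_eq, infDist_singleton]
    have h1 := lt_of_lt_of_le (mem_ball.1 hz) (min_le_right _ _)
    have h2 := dist_triangle_left x' x z
    linarith

/-- The sets `preBall T y r` shrink to zero diameter. Otherwise either some small ball meets all of
them, as does the complement of a larger concentric ball, or there is a uniformly separated sequence
of points taken from smaller and smaller `preBall`s; in both cases two far apart sets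
meet them all. -/
theorem preBall_small [Nontrivial E] [Nontrivial F] (hT : IsBisep 𝕂 T) (y : Y) {ε : ℝ}
    (hε : 0 < ε) :
    ∃ r > 0, ∀ x ∈ preBall T y r, ∀ x' ∈ preBall T y r, dist x x' < ε := by
  by_contra! hcon
  by_cases hc : ∃ x₀, ∀ r > 0, (ball x₀ (ε / 8) ∩ preBall T y r).Nonempty
  · obtain ⟨x₀, hx₀⟩ := hc
    refine not_far_apart hT y (S := {x₀}) (by positivity : 0 < ε / 8) (fun r hr => ?_)
      fun r hr => ?_
    · obtain ⟨z, hz, hzp⟩ := hx₀ r hr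
      exact ⟨z, by rw [Set.mem_ofPred_eq, infDist_singleton]; exact hz, hzp⟩
    · obtain ⟨x, hx, x', hx', hd⟩ := hcon r hr
      by_contra hne
      have hall : ∀ z ∈ preBall T y r, dist z x₀ ≤ 2 * (ε / 8) := fun z hz => by
        by_contra! hlt
        exact hne ⟨z, by rw [Set.mem_ofPred_eq, infDist_singleton]; exact hlt, hz⟩
      linarith [hall x hx, hall x' hx', dist_triangle_right x x' x₀]
  · push Not at hc
    choose ρ hρ hρe using hc
    have : Nonempty X := (preBall_nonempty hT y one_pos).to_type
    choose! c hcm using fun r hr => preBall_nonempty hT y (r := r) hr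
    -- Radii along the sequence; the point taken at radius `s n` is `c (s n)`.
    let s : ℕ → ℝ := fun n => Nat.rec 1 (fun _ t => min (t / 2) (ρ (c t))) n
    have hs1 : ∀ n, s (n + 1) = min (s n / 2) (ρ (c (s n))) := fun n => rfl
    have hspos : ∀ n, 0 < s n := fun n => by
      induction n with
      | zero => exact one_pos
      | succ n ih => rw [hs1]; exact lt_min (by linarith) (hρ _)
    have hsanti : Antitone s := antitone_nat_of_succ_le fun n => by
      rw [hs1]; exact (min_le_left _ _).trans (by linarith [hspos n])
    have hspow : ∀ n, s n ≤ (1 / 2) ^ n := fun n => by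
      induction n with
      | zero => exact le_of_eq (by simp [s])
      | succ n ih =>
        rw [hs1, pow_succ]; exact (min_le_left _ _).trans (by linarith)
    have hsep : ∀ m n, m < n → ε / 8 ≤ dist (c (s n)) (c (s m)) := fun m n hmn => by
      by_contra! hlt
      have h1 : s n ≤ ρ (c (s m)) := (hsanti hmn).trans (by rw [hs1]; exact min_le_right _ _)
      exact eq_empty_iff_forall_notMem.1 (hρe (c (s m))) _
        ⟨hlt, preBall_mono y h1 (hcm _ (hspos n))⟩
    have hsep' : ∀ m n, m ≠ n → ε / 8 ≤ dist (c (s n)) (c (s m)) := fun m n hmn => by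
      rcases hmn.lt_or_gt with h | h
      · exact hsep m n h
      · rw [dist_comm]; exact hsep n m h
    have hsmall : ∀ r > 0, ∃ N, ∀ n ≥ N, s n ≤ r := fun r hr => by
      obtain ⟨N, hN⟩ := exists_pow_lt_of_lt_one hr (by norm_num : (1 / 2 : ℝ) < 1)
      exact ⟨N, fun n hn => (hsanti hn).trans ((hspow N).trans hN.le)⟩
    let S : Set X := range fun k => c (s (2 * k))
    have hS : S.Nonempty := range_nonempty _
    refine not_far_apart hT y (S := S) (by positivity : 0 < ε / 32) (fun r hr => ?_)
      fun r hr => ?_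
    · obtain ⟨N, hN⟩ := hsmall r hr
      refine ⟨c (s (2 * N)), ?_, preBall_mono y (hN (2 * N) (by omega)) (hcm _ (hspos _))⟩
      rw [Set.mem_ofPred_eq, infDist_zero_of_mem (show _ ∈ S from ⟨N, rfl⟩)]
      positivity
    · obtain ⟨N, hN⟩ := hsmall r hr
      refine ⟨c (s (2 * N + 1)), ?_,
        preBall_mono y (hN (2 * N + 1) (by omega)) (hcm _ (hspos (2 * N + 1)))⟩
      refine lt_of_lt_of_le (by linarith : 2 * (ε / 32) < ε / 8) ((le_infDist hS).2 ?_)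
      rintro _ ⟨k, rfl⟩
      exact hsep' (2 * k) (2 * N + 1) (by omega)

theorem exists_supp [CompleteSpace X] [Nontrivial E] [Nontrivial F] (hT : IsBisep 𝕂 T) (y : Y) :
    ∃ x, Supp T x y := by
  choose x hx using fun n : ℕ =>
    preBall_nonempty hT y (r := 1 / ((n : ℝ) + 1)) Nat.one_div_pos_of_nat
  have hmem : ∀ r > 0, ∃ N, ∀ n ≥ N, x n ∈ preBall T y r := fun r hr => by
    obtain ⟨N, hN⟩ := exists_nat_one_div_lt hr
    exact ⟨N, fun n hn => preBall_mono y ((Nat.one_div_le_one_div hn).trans hN.le) (hx n)⟩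
  have hcau : CauchySeq x := Metric.cauchySeq_iff.2 fun ε hε => by
    obtain ⟨r, hr, hd⟩ := preBall_small hT y hε
    obtain ⟨N, hN⟩ := hmem r hr
    exact ⟨N, fun m hm n hn => hd _ (hN m hm) _ (hN n hn)⟩
  obtain ⟨a, ha⟩ := cauchySeq_tendsto_of_complete hcau
  refine ⟨a, fun r hr => ?_⟩
  obtain ⟨N, hN⟩ := hmem r hr
  obtain ⟨M, hM⟩ := Metric.tendsto_atTop.1 ha r hr
  exact ⟨x (max N M), hM _ (le_max_right _ _), hN _ (le_max_left _ _)⟩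

/-! ### Images depend only on the value at the supporting point -/

/-- If `f` vanishes at the point supporting `y`, then `T f` vanishes at `y`. When that point `x` is
not isolated, multiply `f` by a cutoff alternating between `1` and `0` near the points of a sequence
tending rapidly to `x`; the product `g` is Lipschitz as `f x = 0`, and `T g y` is both `T f y`
and `0`. -/
theorem Supp.map_eq_zero [Nontrivial E] (hT : IsBisep 𝕂 T) {x : X} {y : Y} (h : Supp T x y)
    {f : X → E} (hf : IsLip f) (hfx : f x = 0) : T f y = 0 := by
  have h0 : IsLip (0 : X → E) := isLip_const 0
  have hT0 : T 0 = 0 := by simpa using hT.map_sub h0 h0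
  by_cases hiso : ∃ ε > 0, ball x ε ⊆ {x}
  · obtain ⟨ε, hε, hsub⟩ := hiso
    have := eq_of_forall_exists (hT.maps_lip f hf).cont (hT.maps_lip 0 h0).cont (y := y)
      fun r hr => exists_agree hT (isOpen_ball (x := x) (ε := ε)) (by
        obtain ⟨z, hz, hzp⟩ := h (min r ε) (lt_min hr hε)
        exact ⟨z, ball_subset_ball (min_le_right _ _) hz, preBall_mono y (min_le_left _ _) hzp⟩)
        hf h0 fun z hz => by rw [show z = x from hsub hz, hfx]; rfl
    rw [this, hT0]; rfl
  push Not at hiso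
  have hex : ∀ r > 0, ∃ z, 0 < dist z x ∧ dist z x < r ∧
      ∀ δ > 0, (ball z δ ∩ preBall T y r).Nonempty := fun r hr => by
    obtain ⟨z, hz, g, hg, hgc, hgz⟩ := h r hr
    have hopen : IsOpen (ball x r ∩ coz g) :=
      isOpen_ball.inter (isOpen_ne_fun hg.cont continuous_const)
    obtain ⟨w, ⟨hw, hgw⟩, hwx⟩ : ∃ w ∈ ball x r ∩ coz g, w ≠ x := by
      by_cases hzx : z = x
      · subst hzx
        obtain ⟨ε, hε, hsub⟩ := Metric.isOpen_iff.1 hopen z ⟨hz, hgz⟩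
        obtain ⟨w, hw, hwz⟩ := Set.not_subset.1 (hiso ε hε)
        exact ⟨w, hsub hw, hwz⟩
      · exact ⟨z, ⟨hz, hgz⟩, hzx⟩
    exact ⟨w, dist_pos.2 hwx, hw, fun δ hδ => ⟨w, mem_ball_self hδ, g, hg, hgc, hgw⟩⟩
  have : Nonempty X := ⟨x⟩
  choose! c hc0 hcr hcm using hex
  let s : ℕ → ℝ := fun n => Nat.rec 1 (fun _ t => dist (c t) x / 4) n
  have hs1 : ∀ n, s (n + 1) = dist (c (s n)) x / 4 := fun n => rfl
  have hspos : ∀ n, 0 < s n := fun n => by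
    induction n with
    | zero => exact one_pos
    | succ n ih => rw [hs1]; linarith [hc0 _ ih]
  have hsstep : ∀ n, s (n + 1) ≤ s n / 4 := fun n => by
    rw [hs1]; linarith [hcr _ (hspos n)]
  have hsanti : Antitone s := antitone_nat_of_succ_le fun n => by
    linarith [hsstep n, hspos n]
  have hspow : ∀ n, s n ≤ (1 / 4) ^ n := fun n => by
    induction n with
    | zero => exact le_of_eq (by simp [s])
    | succ n ih => rw [pow_succ]; linarith [hsstep n]
  have hsmall : ∀ r > 0, ∃ N, ∀ n ≥ N, s n ≤ r := fun r hr => by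
    obtain ⟨N, hN⟩ := exists_pow_lt_of_lt_one hr (by norm_num : (1 / 4 : ℝ) < 1)
    exact ⟨N, fun n hn => (hsanti hn).trans ((hspow N).trans hN.le)⟩
  have hdec : ∀ m n, m < n → dist (c (s n)) x ≤ dist (c (s m)) x / 4 := fun m n hmn => by
    rw [← hs1]
    exact (hcr _ (hspos n)).le.trans (hsanti hmn)
  have hsep : ∀ m n, m ≠ n → dist (c (s m)) x / 2 < dist (c (s m)) (c (s n)) := by
    intro m n hmn
    have hm := hc0 _ (hspos m)
    have hn := hc0 _ (hspos n)
    rcases hmn.lt_or_gt with hlt | hlt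
    · linarith [hdec m n hlt, dist_triangle (c (s m)) (c (s n)) x]
    · linarith [hdec n m hlt, dist_triangle_left (c (s n)) x (c (s m))]
  let S : Set X := range fun k => c (s (2 * k))
  have hS : S.Nonempty := range_nonempty _
  have hxS : x ∈ closure S := Metric.mem_closure_iff.2 fun ε hε => by
    obtain ⟨N, hN⟩ := hsmall ε hε
    refine ⟨c (s (2 * N)), ⟨N, rfl⟩, ?_⟩
    rw [dist_comm]
    exact (hcr _ (hspos _)).trans_le (hN (2 * N) (by omega))
  have hg := hf.smul_conical 𝕂 hfx hxS
  set g : X → E := fun z => (clamp (2 - 8 * (infDist z S / dist z x)) : 𝕂) • f z with hgdef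
  have hcI := continuous_infDist_pt S
  have hcd : Continuous fun z => dist z x := continuous_id.dist continuous_const
  have e₁ : T g y = T f y := by
    refine eq_of_forall_exists (hT.maps_lip g hg).cont (hT.maps_lip f hf).cont fun r hr => ?_
    obtain ⟨N, hN⟩ := hsmall r hr
    have hopen : IsOpen {z | infDist z S < dist z x / 8} := isOpen_lt hcI (hcd.div_const _)
    have hin : c (s (2 * N)) ∈ {z | infDist z S < dist z x / 8} := by
      rw [Set.mem_ofPred_eq, infDist_zero_of_mem (show _ ∈ S from ⟨N, rfl⟩)]
      have := hc0 _ (hspos (2 * N))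
      positivity
    obtain ⟨δ, hδ, hsub⟩ := Metric.isOpen_iff.1 hopen _ hin
    obtain ⟨z, hz, hzp⟩ := hcm _ (hspos (2 * N)) δ hδ
    refine exists_agree hT hopen ⟨z, hsub hz, preBall_mono y (hN (2 * N) (by omega)) hzp⟩ hg hf
      fun w hw => ?_
    have hw' : infDist w S < dist w x / 8 := hw
    have hI := infDist_nonneg (x := w) (s := S)
    have hwx : 0 < dist w x := by linarith
    have : infDist w S / dist w x ≤ 1 / 8 := by rw [div_le_iff₀ hwx]; linarith
    simp only [hgdef, clamp_eq_one (show 1 ≤ 2 - 8 * (infDist w S / dist w x) by linarith),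
      RCLike.ofReal_one, one_smul]
  have e₂ : T g y = T 0 y := by
    refine eq_of_forall_exists (hT.maps_lip g hg).cont (hT.maps_lip 0 h0).cont fun r hr => ?_
    obtain ⟨N, hN⟩ := hsmall r hr
    have hopen : IsOpen {z | dist z x / 4 < infDist z S} := isOpen_lt (hcd.div_const _) hcI
    have hin : c (s (2 * N + 1)) ∈ {z | dist z x / 4 < infDist z S} := by
      have := hc0 _ (hspos (2 * N + 1))
      refine lt_of_lt_of_le (by linarith : _ < dist (c (s (2 * N + 1))) x / 2)
        ((le_infDist hS).2 ?_)
      rintro _ ⟨k, rfl⟩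
      exact (hsep (2 * N + 1) (2 * k) (by omega)).le
    obtain ⟨δ, hδ, hsub⟩ := Metric.isOpen_iff.1 hopen _ hin
    obtain ⟨z, hz, hzp⟩ := hcm _ (hspos (2 * N + 1)) δ hδ
    refine exists_agree hT hopen
      ⟨z, hsub hz, preBall_mono y (hN (2 * N + 1) (by omega)) hzp⟩ hg h0
      fun w hw => ?_
    have hw' : dist w x / 4 < infDist w S := hw
    rcases (dist_nonneg (x := w) (y := x)).eq_or_lt with hwx | hwx
    · rw [show w = x from dist_eq_zero.1 hwx.symm]
      simp [hgdef, hfx]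
    have : 1 / 4 ≤ infDist w S / dist w x := by rw [le_div_iff₀ hwx]; linarith
    simp only [hgdef, clamp_eq_zero (show 2 - 8 * (infDist w S / dist w x) ≤ 0 by linarith),
      RCLike.ofReal_zero, zero_smul, Pi.zero_apply]
  rw [← e₁, e₂, hT0]; rfl

theorem Supp.map_eq [Nontrivial E] (hT : IsBisep 𝕂 T) {x : X} {y : Y} (h : Supp T x y)
    {f : X → E} (hf : IsLip f) : T f y = T (fun _ => f x) y := by
  have := h.map_eq_zero hT (hf.sub (isLip_const (f x))) (by simp)
  rw [hT.map_sub hf (isLip_const _)] at this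
  exact sub_eq_zero.1 this

/-- The support map is Lipschitz: with `k` the preimage of a constant `v`, one has
`T (s • k) = (s ∘ h) • v` for every real Lipschitz function `s`, so composition with `h` preserves
the Lipschitz property. -/
theorem lipschitz_supp [Nontrivial E] [Nontrivial F] (hXb : IsBounded (univ : Set X))
    (hT : IsBisep 𝕂 T) {h : Y → X} (hh : ∀ y, Supp T (h y) y) :
    ∃ K : ℝ≥0, LipschitzWith K h := by
  obtain ⟨v, hv⟩ := exists_ne (0 : F)
  obtain ⟨k, hk, hTk⟩ := hT.surj _ (isLip_const (X := Y) v)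
  refine lipschitz_of_comp hXb h fun s hs => ?_
  obtain ⟨L, B, hL, hB, h1, h2⟩ := hs.bounds
  obtain ⟨L', M, hL', hM, h1', h2'⟩ := hk.bounds
  have hsk : IsLip fun x => (s x : 𝕂) • k x := hk.cutoff 𝕂 B (M * L) h2 fun x x' => by
    rw [mul_assoc]
    exact mul_le_mul (h2' x) (h1 x x') (abs_nonneg _) hM
  have hval : ∀ y, T (fun x => (s x : 𝕂) • k x) y = (s (h y) : 𝕂) • v := fun y => by
    rw [(hh y).map_eq hT hsk]
    have e1 := hT.map_smul (s (h y) : 𝕂) _ (isLip_const (X := X) (k (h y)))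
    have e2 := (hh y).map_eq hT hk
    rw [hTk] at e2
    have := congrFun e1 y
    rw [Pi.smul_apply, ← e2] at this
    exact this
  obtain ⟨C, -, -, -, hC, -⟩ := (hT.maps_lip _ hsk).bounds
  refine ⟨C / ‖v‖, fun y y' => ?_⟩
  have hvn : 0 < ‖v‖ := norm_pos_iff.2 hv
  have := hC y y'
  rw [hval, hval, ← sub_smul, ← RCLike.ofReal_sub, norm_smul, RCLike.norm_ofReal] at this
  rwa [div_mul_eq_mul_div, le_div_iff₀ hvn]

end Local

/-! ### The representation -/

/-- Every linear biseparating map `T : Lip(X,E) → Lip(Y,F)` is a weighted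
composition map: there are a bi-Lipschitz homeomorphism `h : Y → X` and linear bijections
`J y : E → F` with `(T f) y = J y (f (h y))`. -/
theorem biseparating_representation
    {𝕂 X Y E F : Type*} [RCLike 𝕂]
    [MetricSpace X] [CompleteSpace X] [MetricSpace Y] [CompleteSpace Y]
    [NormedAddCommGroup E] [NormedSpace 𝕂 E] [Nontrivial E]
    [NormedAddCommGroup F] [NormedSpace 𝕂 F] [Nontrivial F]
    (hXb : IsBounded (univ : Set X)) (hYb : IsBounded (univ : Set Y))
    (T : (X → E) → (Y → F)) (hT : IsBisep 𝕂 T) :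
    ∃ (h : Y → X) (J : Y → E → F),
      Bijective h ∧ (∃ K : ℝ≥0, LipschitzWith K h) ∧ (∃ K : ℝ≥0, AntilipschitzWith K h) ∧
      (∀ y, IsLinearMap 𝕂 (J y) ∧ Bijective (J y)) ∧
      ∀ f, IsLip f → ∀ y, T f y = J y (f (h y)) := by
  obtain ⟨S, hS, hST, hTS⟩ := hT.exists_inverse
  choose h hh using exists_supp hT
  choose h' hh' using exists_supp hS
  have hinv : ∀ x, h (h' x) = x := fun x =>
    (hh (h' x)).unique hT ((hh' x).inverse hS hTS)
  have hinv' : ∀ y, h' (h y) = y := fun y =>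
    (hh' (h y)).unique hS ((hh y).inverse hT hST)
  obtain ⟨K, hK⟩ := lipschitz_supp hXb hT hh
  obtain ⟨K', hK'⟩ := lipschitz_supp hYb hS hh'
  refine ⟨h, fun y e => T (fun _ => e) y, ⟨LeftInverse.injective hinv',
    RightInverse.surjective hinv⟩, ⟨K, hK⟩, ⟨K', hK'.to_rightInverse hinv'⟩,
    fun y => ⟨⟨fun a b => ?_, fun c a => ?_⟩, fun a b hab => ?_, fun w => ?_⟩,
    fun f hf y => (hh y).map_eq hT hf⟩
  · exact congrFun (hT.map_add _ _ (isLip_const a) (isLip_const b)) y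
  · exact congrFun (hT.map_smul c _ (isLip_const a)) y
  -- `T (a - b)` vanishes at `y`, so `a - b = S (T (a - b))` vanishes at `h y`.
  · have hl : IsLip ((fun _ : X => a) - fun _ => b) := (isLip_const a).sub (isLip_const b)
    have h0 : T ((fun _ => a) - fun _ => b) y = 0 := by
      rw [hT.map_sub (isLip_const a) (isLip_const b)]
      exact sub_eq_zero.2 hab
    have := ((hh y).inverse hT hST).map_eq_zero hS (hT.maps_lip _ hl) h0
    rw [hST _ hl] at this
    exact sub_eq_zero.1 this
  · refine ⟨S (fun _ => w) (h y), ?_⟩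
    have := (hh y).map_eq hT (hS.maps_lip _ (isLip_const w))
    rw [hTS _ (isLip_const w)] at this
    exact this.symm
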